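/- Suppose ξ = 2πp/q, where p and q are coprime positive integers with 0 < p/q < 1/2. Fix an integer ℓ ≥ 0 and δ ≠ 0, and assume C₁(ℓ)² + C₂(ℓ)² > 0. Then, for every choice, for each N, of a unit eigenvector u_N of H(δ)H(δ)ᵀ corresponding to its largest eigenvalue, the real sequence N ↦ r_{N−1−ℓ}(N) has at least two distinct limit (cluster) points; in particular it does not converge. -/

import Mathlib

open Filter Matrix

/-- Hankelization (diagonal averaging): the `j`-th value is the average of the
entries `Y i k` with `i + k = j`. -/
noncomputable def hankelize {L K : ℕ} (Y : Matrix (Fin L) (Fin K) ℝ) (j : ℕ) : ℝ :=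
  (∑ i : Fin L, ∑ k : Fin K, if (i : ℕ) + (k : ℕ) = j then Y i k else 0) /
  (∑ i : Fin L, ∑ k : Fin K, if (i : ℕ) + (k : ℕ) = j then (1 : ℝ) else 0)

/-- The `L × K` Hankel (trajectory) matrix of a series `x`. -/
noncomputable def hankelOf (x : ℕ → ℝ) (L K : ℕ) : Matrix (Fin L) (Fin K) ℝ :=
  Matrix.of fun i k => x ((i : ℕ) + (k : ℕ))

/-- Squared Euclidean norm of a vector. -/
noncomputable def normSq {M : ℕ} (w : Fin M → ℝ) : ℝ := ∑ i, w i ^ 2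

/-- `u` is a unit eigenvector of `A` corresponding to its largest eigenvalue. -/
def IsTopEigenvector {L : ℕ} (A : Matrix (Fin L) (Fin L) ℝ) (u : Fin L → ℝ) : Prop :=
  normSq u = 1 ∧ ∃ μ : ℝ, A.mulVec u = μ • u ∧
    ∀ (ν : ℝ) (v : Fin L → ℝ), v ≠ 0 → A.mulVec v = ν • v → ν ≤ μ

/-- The exponential signal `x_n = a^n`. -/
noncomputable def expSignal (a : ℝ) : ℕ → ℝ := fun n => a ^ n

/-- The harmonic noise `e_n = cos (ξ n + φ)`. -/
noncomputable def cosNoise (ξ φ : ℝ) : ℕ → ℝ := fun n => Real.cos (ξ * (n : ℝ) + φ)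

/-- The vector `W_M = (1, a, …, a^{M-1})ᵀ`. -/
noncomputable def Wvec (a : ℝ) (M : ℕ) : Fin M → ℝ := fun i => a ^ (i : ℕ)

/-- `ρ_j = (𝒮(P₀ E Hᵀ S₀ H))_j + (𝒮(P₀⊥ E))_j`. -/
noncomputable def rho (a ξ φ : ℝ) (L K : ℕ) (j : ℕ) : ℝ :=
  let H := hankelOf (expSignal a) L K
  let E := hankelOf (cosNoise ξ φ) L K
  let P0perp : Matrix (Fin L) (Fin L) ℝ :=
    (normSq (Wvec a L))⁻¹ • Matrix.vecMulVec (Wvec a L) (Wvec a L)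
  let P0 : Matrix (Fin L) (Fin L) ℝ := 1 - P0perp
  let S0 : Matrix (Fin L) (Fin L) ℝ :=
    ((normSq (Wvec a L)) ^ 2 * normSq (Wvec a K))⁻¹ • Matrix.vecMulVec (Wvec a L) (Wvec a L)
  hankelize (P0 * E * Hᵀ * S0 * H) j + hankelize (P0perp * E) j

/-- The matrix `H(δ)H(δ)ᵀ` for the perturbed series `a^n + δ cos(ξ n + φ)`. -/
noncomputable def HdeltaSq (a ξ φ δ : ℝ) (L K : ℕ) : Matrix (Fin L) (Fin L) ℝ :=
  let Hδ := hankelOf (expSignal a) L K + δ • hankelOf (cosNoise ξ φ) L K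
  Hδ * Hδᵀ

/-- The SSA reconstruction error `r_j = (𝒮(u uᵀ H(δ)))_j - a^j`. -/
noncomputable def recErr (a ξ φ δ : ℝ) (L K : ℕ) (u : Fin L → ℝ) (j : ℕ) : ℝ :=
  hankelize (Matrix.vecMulVec u u *
    (hankelOf (expSignal a) L K + δ • hankelOf (cosNoise ξ φ) L K)) j - a ^ j

/-- `G(a,ξ) = (a²-1)/(a(a²+1-2a cos ξ))`. -/
noncomputable def Gfun (a ξ : ℝ) : ℝ := (a ^ 2 - 1) / (a * (a ^ 2 + 1 - 2 * a * Real.cos ξ))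

/-- The coefficient `C₁(ℓ)`. -/
noncomputable def C1 (a ξ : ℝ) (ℓ : ℕ) : ℝ :=
  (2 / (1 + (ℓ : ℝ))) * (a * Real.cos ((ℓ : ℝ) * ξ) - a ^ (-(ℓ : ℤ)) * Real.cos ξ)
  - (a ^ 2 + 1 - 2 * a * Real.cos ξ - 2 * Real.sin ξ ^ 2) * Gfun a ξ * a ^ (-(ℓ : ℤ))

/-- The coefficient `C₂(ℓ)`. -/
noncomputable def C2 (a ξ : ℝ) (ℓ : ℕ) : ℝ :=
  (2 / (1 + (ℓ : ℝ))) * (a * Real.sin ((ℓ : ℝ) * ξ) + a ^ (-(ℓ : ℤ)) * Real.sin ξ)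
  - 2 * Real.sin ξ * (a - Real.cos ξ) * Gfun a ξ * a ^ (-(ℓ : ℤ))

/-- `D(ℓ) = G(a,ξ)·√(C₁(ℓ)² + C₂(ℓ)²)`. -/
noncomputable def Dfun (a ξ : ℝ) (ℓ : ℕ) : ℝ :=
  Gfun a ξ * Real.sqrt (C1 a ξ ℓ ^ 2 + C2 a ξ ℓ ^ 2)


set_option maxHeartbeats 1000000 in
lemma core_scalar (B σ μ c wi vk S Pp R Fw Fs Fu n : ℝ) (hB : 0 ≤ B) (hσ : 0 < σ)
    (h2 : 2 * B ≤ σ) (hμ3 : σ ^ 2 / 4 ≤ μ) (hμ0 : 0 < μ) (hμσ : |μ - σ ^ 2| ≤ 5 / 2 * σ * B)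
    (hsb : n ≤ 6 * B / σ) (hc1 : |c| ≤ 1) (hc0 : 0 ≤ 1 - c ^ 2)
    (hc2 : 1 - c ^ 2 ≤ 36 * B ^ 2 / σ ^ 2) (hwi1 : |wi| ≤ 1) (hvk1 : |vk| ≤ 1)
    (hsi : |S| ≤ n) (hpi : |Pp| ≤ B) (hri : |R| ≤ B ^ 2) (hFwk : |Fw| ≤ B) (hFuk : |Fu| ≤ B)
    (hFsk : |Fs| ≤ B * n) (hFu' : Fu = c * Fw + Fs)
    (hmsi : μ * S = σ * c * Pp + R) :
    |(c * wi + S) * (σ * c * vk + Fu) - σ * wi * vk - (Pp * vk + wi * Fw)|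
      ≤ 200 * B ^ 2 / σ := by
  have e1 : |σ * (c ^ 2 - 1) * wi * vk| ≤ 36 * B ^ 2 / σ := by
    rw [abs_mul, abs_mul, abs_mul, abs_of_pos hσ, abs_sub_comm, abs_of_nonneg hc0]
    calc σ * (1 - c ^ 2) * |wi| * |vk| ≤ σ * (36 * B ^ 2 / σ ^ 2) * 1 * 1 := by gcongr
      _ = _ := by field_simp
  have e2 : |σ * c * S - Pp| ≤ 86 * B ^ 2 / σ := by
    have h1 : σ * c * S - Pp = ((σ ^ 2 * c ^ 2 - μ) * Pp + σ * c * R) / μ := by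
      field_simp
      linear_combination (σ * c) * hmsi
    have h2' : |σ ^ 2 * c ^ 2 - μ| ≤ 41 / 2 * σ * B := by
      have : σ ^ 2 * (1 - c ^ 2) ≤ 36 * B ^ 2 := by
        calc σ ^ 2 * (1 - c ^ 2) ≤ σ ^ 2 * (36 * B ^ 2 / σ ^ 2) := by gcongr
          _ = _ := by field_simp
      have h0 : 0 ≤ σ ^ 2 * (1 - c ^ 2) := by positivity
      rw [abs_le] at hμσ ⊢
      constructor <;> nlinarith
    have h3 : |(σ ^ 2 * c ^ 2 - μ) * Pp + σ * c * R| ≤ 43 / 2 * σ * B ^ 2 := by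
      refine (abs_add_le _ _).trans ?_
      rw [abs_mul, abs_mul, abs_mul, abs_of_pos hσ]
      have g1 : |σ ^ 2 * c ^ 2 - μ| * |Pp| ≤ 41 / 2 * σ * B * B := by gcongr
      have g2 : σ * |c| * |R| ≤ σ * 1 * B ^ 2 := by gcongr
      nlinarith
    rw [h1, abs_div, abs_of_pos hμ0, div_le_div_iff₀ hμ0 hσ]
    have : 86 * B ^ 2 * (σ ^ 2 / 4) ≤ 86 * B ^ 2 * μ := by gcongr
    nlinarith
  have e3 : |(c ^ 2 - 1) * wi * Fw| ≤ 18 * B ^ 2 / σ := by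
    rw [abs_mul, abs_mul, abs_sub_comm, abs_of_nonneg hc0]
    calc (1 - c ^ 2) * |wi| * |Fw| ≤ (36 * B ^ 2 / σ ^ 2) * 1 * B := by gcongr
      _ = 18 * B ^ 2 * (2 * B) / σ ^ 2 := by ring
      _ ≤ 18 * B ^ 2 * σ / σ ^ 2 := by gcongr
      _ = _ := by field_simp
  have e4 : |c * wi * Fs| ≤ 6 * B ^ 2 / σ := by
    rw [abs_mul, abs_mul]
    calc |c| * |wi| * |Fs| ≤ 1 * 1 * (B * (6 * B / σ)) := by
          gcongr
          exact hFsk.trans (by gcongr)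
      _ = _ := by ring
  have e5 : |S * Fu| ≤ 6 * B ^ 2 / σ := by
    rw [abs_mul]
    calc |S| * |Fu| ≤ (6 * B / σ) * B := by
          gcongr
          exact hsi.trans hsb
      _ = _ := by ring
  have e2' : |(σ * c * S - Pp) * vk| ≤ 86 * B ^ 2 / σ := by
    rw [abs_mul]
    calc _ ≤ 86 * B ^ 2 / σ * 1 := by gcongr
      _ = _ := by ring
  have key : (c * wi + S) * (σ * c * vk + Fu) - σ * wi * vk - (Pp * vk + wi * Fw)
      = σ * (c ^ 2 - 1) * wi * vk + (σ * c * S - Pp) * vk + (c ^ 2 - 1) * wi * Fw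
        + c * wi * Fs + S * Fu := by
    linear_combination (c * wi) * hFu'
  rw [key]
  have hBn : 0 ≤ B ^ 2 / σ := by positivity
  have : 36 * B ^ 2 / σ + 86 * B ^ 2 / σ + 18 * B ^ 2 / σ + 6 * B ^ 2 / σ + 6 * B ^ 2 / σ
      ≤ 200 * B ^ 2 / σ := by
    have : 36 * B ^ 2 / σ + 86 * B ^ 2 / σ + 18 * B ^ 2 / σ + 6 * B ^ 2 / σ + 6 * B ^ 2 / σ
      = 152 * (B ^ 2 / σ) := by ring
    have h' : 200 * B ^ 2 / σ = 200 * (B ^ 2 / σ) := by ring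
    linarith
  refine le_trans ?_ this
  refine (abs_add_le _ _).trans (add_le_add ?_ e5)
  refine (abs_add_le _ _).trans (add_le_add ?_ e4)
  refine (abs_add_le _ _).trans (add_le_add ?_ e3)
  exact (abs_add_le _ _).trans (add_le_add e1 e2')

set_option maxHeartbeats 1000000 in
lemma core {X Y : Type*} [NormedAddCommGroup X] [InnerProductSpace ℝ X]
    [NormedAddCommGroup Y] [InnerProductSpace ℝ Y]
    (E : Y →ₗ[ℝ] X) (F : X →ₗ[ℝ] Y) (hEF : ∀ x y, inner ℝ x (E y) = inner ℝ (F x) y)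
    (B σ μ : ℝ) (hB : 0 ≤ B) (hσ : 0 < σ) (h2 : 2 * B ≤ σ)
    (hE : ∀ y, ‖E y‖ ≤ B * ‖y‖) (hF : ∀ x, ‖F x‖ ≤ B * ‖x‖)
    (w u : X) (v : Y) (hw : ‖w‖ = 1) (hv : ‖v‖ = 1) (hu : ‖u‖ = 1)
    (y : Y) (hy : y = (σ * inner ℝ w u) • v + F u)
    (heig : (σ * inner ℝ v y) • w + E y = μ • u)
    (hμ : ‖σ • v + F w‖ ^ 2 ≤ μ)
    (f : X) (h : Y) (hf : ‖f‖ ≤ 1) (hh : ‖h‖ ≤ 1) :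
    |inner ℝ f u * inner ℝ h y - σ * inner ℝ f w * inner ℝ h v
      - ((inner ℝ f (E v) - inner ℝ f w * inner ℝ w (E v)) * inner ℝ h v
        + inner ℝ f w * inner ℝ h (F w))| ≤ 200 * B ^ 2 / σ := by
  have inn : ∀ {Z : Type _} [NormedAddCommGroup Z] [InnerProductSpace ℝ Z] (g z : Z),
      ‖g‖ ≤ 1 → |inner ℝ g z| ≤ ‖z‖ := by
    intro Z _ _ g z hg
    have := abs_real_inner_le_norm g z
    nlinarith [norm_nonneg z, norm_nonneg g]
  have inn' : ∀ (g z : Y), ‖g‖ ≤ 1 → |inner ℝ g z| ≤ ‖z‖ := by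
    intro g z hg
    have := abs_real_inner_le_norm g z
    nlinarith [norm_nonneg z, norm_nonneg g]
  set c := inner ℝ w u with hc
  have hc1 : |c| ≤ 1 := by
    have := inn w u hw.le
    rwa [hu] at this
  have hww : inner ℝ w w = (1:ℝ) := by rw [real_inner_self_eq_norm_sq, hw]; norm_num
  have huu : inner ℝ u u = (1:ℝ) := by rw [real_inner_self_eq_norm_sq, hu]; norm_num
  -- projection
  have proj : ∀ x : X, ‖x - (inner ℝ w x : ℝ) • w‖ ^ 2 = ‖x‖ ^ 2 - (inner ℝ w x) ^ 2 := by
    intro x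
    rw [norm_sub_sq_real, norm_smul, hw, inner_smul_right, real_inner_comm x w, Real.norm_eq_abs,
      mul_one, sq_abs]
    ring
  have projle : ∀ x : X, ‖x - (inner ℝ w x : ℝ) • w‖ ≤ ‖x‖ := by
    intro x
    apply le_of_sq_le_sq _ (norm_nonneg x)
    rw [proj]; nlinarith [sq_nonneg (inner ℝ w x : ℝ)]
  -- μ bounds
  have hFu : ‖F u‖ ≤ B := by simpa [hu] using hF u
  have hFw : ‖F w‖ ≤ B := by simpa [hw] using hF w
  have hEv : ‖E v‖ ≤ B := by simpa [hv] using hE v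
  have hμ1 : (σ - B) ^ 2 ≤ μ := by
    refine le_trans ?_ hμ
    have h1 : σ - B ≤ ‖σ • v + F w‖ := by
      have := norm_sub_norm_le (σ • v) (-(F w))
      rw [norm_smul, hv, norm_neg, sub_neg_eq_add, Real.norm_eq_abs, abs_of_pos hσ] at this
      linarith
    have : 0 ≤ σ - B := by linarith
    gcongr
  have hyn : ‖y‖ ≤ σ + B := by
    rw [hy]
    refine (norm_add_le _ _).trans ?_
    rw [norm_smul, hv, Real.norm_eq_abs, abs_mul, abs_of_pos hσ]
    nlinarith
  have hμy : μ = ‖y‖ ^ 2 := by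
    have h1 : inner ℝ u ((σ * inner ℝ v y) • w + E y) = μ := by
      rw [heig, inner_smul_right, huu, mul_one]
    rw [← h1, inner_add_right, inner_smul_right, hEF, real_inner_comm w u, ← hc,
      ← real_inner_self_eq_norm_sq]
    conv_rhs => rw [hy]
    rw [inner_add_left, inner_smul_left, hy]
    simp; ring
  have hμ2 : μ ≤ (σ + B) ^ 2 := by
    rw [hμy]; gcongr
  have hμ3 : σ ^ 2 / 4 ≤ μ := by nlinarith
  have hμ0 : 0 < μ := lt_of_lt_of_le (by positivity) hμ3
  have hμσ : |μ - σ ^ 2| ≤ 5 / 2 * σ * B := by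
    rw [abs_le]; constructor <;> nlinarith
  -- s
  set s := u - c • w with hs
  have hsn : ‖s‖ ^ 2 = 1 - c ^ 2 := by rw [hs, hc, proj, hu]; norm_num
  have hEFu : ‖E (F u)‖ ≤ B ^ 2 := (hE _).trans (by nlinarith)
  set p := E v - (inner ℝ w (E v) : ℝ) • w with hp
  set r := E (F u) - (inner ℝ w (E (F u)) : ℝ) • w with hr
  have hpn : ‖p‖ ≤ B := (projle _).trans hEv
  have hrn : ‖r‖ ≤ B ^ 2 := (projle _).trans hEFu
  have hms : μ • s = (σ * c) • p + r := by
    have h1 : inner ℝ w ((σ * inner ℝ v y) • w + E y) = μ * c := by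
      rw [heig, inner_smul_right]
    rw [inner_add_right, inner_smul_right, hww] at h1
    have hEy : E y = (σ * c) • E v + E (F u) := by rw [hy]; simp
    rw [hs, smul_sub, ← heig, smul_smul, ← h1, hp, hr, hEy, inner_add_right, inner_smul_right]
    module
  have hsb : ‖s‖ ≤ 6 * B / σ := by
    have h1 : μ * ‖s‖ ≤ σ * B + B ^ 2 := by
      have : ‖μ • s‖ ≤ σ * B + B ^ 2 := by
        rw [hms]
        refine (norm_add_le _ _).trans ?_
        rw [norm_smul, Real.norm_eq_abs, abs_mul, abs_of_pos hσ]
        have : σ * |c| * ‖p‖ ≤ σ * 1 * B := by gcongr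
        linarith
      rwa [norm_smul, Real.norm_eq_abs, abs_of_pos hμ0] at this
    rw [le_div_iff₀ hσ]
    have h3 : σ ^ 2 / 4 * ‖s‖ ≤ μ * ‖s‖ := by gcongr
    have h4 : σ * (‖s‖ * σ) ≤ σ * (6 * B) := by nlinarith
    exact le_of_mul_le_mul_left h4 hσ
  have hc2 : 1 - c ^ 2 ≤ 36 * B ^ 2 / σ ^ 2 := by
    rw [← hsn]
    calc ‖s‖ ^ 2 ≤ (6 * B / σ) ^ 2 := by gcongr
      _ = _ := by ring
  have hc0 : 0 ≤ 1 - c ^ 2 := by rw [← hsn]; positivity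
  -- scalars
  set wi := inner ℝ f w with hwi
  set vk := inner ℝ h v with hvk
  have hwi1 : |wi| ≤ 1 := by have := inn f w hf; rwa [hw] at this
  have hvk1 : |vk| ≤ 1 := by have := inn' h v hh; rwa [hv] at this
  have hsi := inn f s hf
  have hpi := (inn f p hf).trans hpn
  have hri := (inn f r hf).trans hrn
  have hFwk := (inn' h (F w) hh).trans hFw
  have hFuk := (inn' h (F u) hh).trans hFu
  have hFsk := (inn' h (F s) hh).trans (hF s)
  have hui : inner ℝ f u = c * wi + inner ℝ f s := by
    rw [hs, inner_sub_right, inner_smul_right]; ring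
  have hFu' : inner ℝ h (F u) = c * inner ℝ h (F w) + inner ℝ h (F s) := by
    rw [hs, map_sub, map_smul, inner_sub_right, inner_smul_right]; ring
  have hyk : inner ℝ h y = σ * c * vk + inner ℝ h (F u) := by
    rw [hy, inner_add_right, inner_smul_right]
  have hpi' : inner ℝ f (E v) - wi * inner ℝ w (E v) = inner ℝ f p := by
    rw [hp, inner_sub_right, inner_smul_right]; ring
  have hmsi : μ * inner ℝ f s = σ * c * inner ℝ f p + inner ℝ f r := by
    rw [← inner_smul_right, hms, inner_add_right, inner_smul_right]
  rw [hpi', hui, hyk]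
  exact core_scalar B σ μ c wi vk _ _ _ _ _ _ ‖s‖ hB hσ h2 hμ3 hμ0 hμσ hsb hc1 hc0 hc2 hwi1 hvk1
    hsi hpi hri hFwk hFuk hFsk hFu' hmsi

lemma top_rayleigh {L : ℕ} (M : Matrix (Fin L) (Fin L) ℝ) (hM : M.IsHermitian)
    (μ : ℝ) (hμ : ∀ (ν : ℝ) (v : Fin L → ℝ), v ≠ 0 → M.mulVec v = ν • v → ν ≤ μ)
    (x : Fin L → ℝ) : x ⬝ᵥ (M *ᵥ x) ≤ μ * (x ⬝ᵥ x) := by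
  have hher : (μ • (1 : Matrix (Fin L) (Fin L) ℝ) - M).IsHermitian := by
    apply IsHermitian.sub _ hM
    have : (1 : Matrix (Fin L) (Fin L) ℝ).IsHermitian := isHermitian_one
    unfold IsHermitian at *
    rw [conjTranspose_smul, this]; simp
  have hps : (μ • (1 : Matrix (Fin L) (Fin L) ℝ) - M).PosSemidef := by
    rw [hher.posSemidef_iff_eigenvalues_nonneg]
    intro j
    have h1 := hher.mulVec_eigenvectorBasis j
    have h0 : (hher.eigenvectorBasis j).ofLp ≠ 0 := by
      intro h
      have h2 := hher.eigenvectorBasis.orthonormal.1 j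
      have : hher.eigenvectorBasis j = 0 := by
        ext i; simpa using congrFun h i
      rw [this] at h2; simp at h2
    rw [sub_mulVec, smul_mulVec, one_mulVec] at h1
    have h3 := hμ (μ - hher.eigenvalues j) _ h0 (by rw [sub_smul, ← h1]; simp)
    simp only [Pi.zero_apply]
    linarith
  have := hps.dotProduct_mulVec_nonneg x
  rw [sub_mulVec, smul_mulVec, one_mulVec, dotProduct_sub, dotProduct_smul] at this
  simp only [star_trivial, smul_eq_mul] at this
  linarith

lemma mulVec_norm_bound {m n : ℕ} (E : Matrix (Fin m) (Fin n) ℝ) (b B : ℝ) (hb : 0 ≤ b)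
    (hB : 0 ≤ B)
    (hE : ∀ i k, |E i k| ≤ b) (hbB : b ^ 2 * (m * n) ≤ B ^ 2) (y : EuclideanSpace ℝ (Fin n)) :
    ‖toEuclideanLin E y‖ ≤ B * ‖y‖ := by
  apply le_of_sq_le_sq _ (by positivity)
  rw [EuclideanSpace.real_norm_sq_eq, mul_pow]
  have h1 : ∀ i : Fin m, ((toEuclideanLin E y).ofLp i) ^ 2 ≤ (b ^ 2 * n) * ‖y‖ ^ 2 := by
    intro i
    have : (toEuclideanLin E y).ofLp i = ∑ k, E i k * y.ofLp k := by
      rw [toLpLin_apply]; rfl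
    rw [this]
    refine (Finset.sum_mul_sq_le_sq_mul_sq _ _ _).trans ?_
    rw [← EuclideanSpace.real_norm_sq_eq]
    gcongr
    calc ∑ k, E i k ^ 2 ≤ ∑ k : Fin n, b ^ 2 :=
          Finset.sum_le_sum fun k _ => sq_le_sq' (abs_le.1 (hE i k)).1 (abs_le.1 (hE i k)).2
      _ = _ := by simp; ring
  calc ∑ i, ((toEuclideanLin E y).ofLp i) ^ 2 ≤ ∑ i : Fin m, (b ^ 2 * n) * ‖y‖ ^ 2 :=
        Finset.sum_le_sum fun i _ => h1 i
    _ = (b ^ 2 * (m * n)) * ‖y‖ ^ 2 := by simp; ring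
    _ ≤ _ := by gcongr

lemma entry_bound {L K : ℕ} (E : Matrix (Fin L) (Fin K) ℝ) (b B σ : ℝ) (hb : 0 ≤ b)
    (hB : 0 ≤ B) (hE : ∀ i k, |E i k| ≤ b) (hbB : b ^ 2 * (L * K) ≤ B ^ 2)
    (hσ : 0 < σ) (h2 : 2 * B ≤ σ) (w : Fin L → ℝ) (v : Fin K → ℝ)
    (hw : normSq w = 1) (hv : normSq v = 1) (A : Matrix (Fin L) (Fin K) ℝ)
    (hA : A = σ • vecMulVec w v + E) (u : Fin L → ℝ) (hu : IsTopEigenvector (A * Aᵀ) u)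
    (i : Fin L) (k : Fin K) :
    |(vecMulVec u u * A) i k - σ * w i * v k
      - (((E *ᵥ v) i - w i * (w ⬝ᵥ (E *ᵥ v))) * v k + w i * (Eᵀ *ᵥ w) k)|
      ≤ 200 * B ^ 2 / σ := by
  obtain ⟨hu1, μ, heig, hmax⟩ := hu
  have hn : ∀ {n : ℕ} (x : Fin n → ℝ), normSq x = 1 → ‖(WithLp.toLp 2 x : EuclideanSpace ℝ (Fin n))‖ = 1 := by
    intro n x hx
    have : ‖(WithLp.toLp 2 x : EuclideanSpace ℝ (Fin n))‖ ^ 2 = 1 := by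
      rw [EuclideanSpace.real_norm_sq_eq]; exact hx
    have h0 := norm_nonneg (WithLp.toLp 2 x : EuclideanSpace ℝ (Fin n))
    nlinarith
  have hin : ∀ {n : ℕ} (x y : Fin n → ℝ),
      inner ℝ (WithLp.toLp 2 x : EuclideanSpace ℝ (Fin n)) (WithLp.toLp 2 y) = x ⬝ᵥ y := by
    intro n x y
    rw [EuclideanSpace.inner_eq_star_dotProduct, dotProduct_comm]; simp
  have hAx : ∀ x : Fin L → ℝ, Aᵀ *ᵥ x = (σ * (w ⬝ᵥ x)) • v + Eᵀ *ᵥ x := by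
    intro x
    rw [hA, transpose_add, add_mulVec, transpose_smul, smul_mulVec, transpose_vecMulVec,
      vecMulVec_mulVec]
    ext j; simp; ring
  have hAy : ∀ y : Fin K → ℝ, A *ᵥ y = (σ * (v ⬝ᵥ y)) • w + E *ᵥ y := by
    intro y
    rw [hA, add_mulVec, smul_mulVec, vecMulVec_mulVec]
    ext j; simp; ring
  have hher : (A * Aᵀ).IsHermitian := by
    have := isHermitian_mul_conjTranspose_self A
    rwa [conjTranspose_eq_transpose_of_trivial] at this
  have hray := top_rayleigh (A * Aᵀ) hher μ hmax w
  have hww : w ⬝ᵥ w = 1 := by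
    rw [← hw]; simp [dotProduct, normSq, sq]
  have hc := core (toEuclideanLin E) (toEuclideanLin Eᵀ)
    (by
      intro x y
      rw [EuclideanSpace.inner_eq_star_dotProduct, EuclideanSpace.inner_eq_star_dotProduct,
        toLpLin_apply, toLpLin_apply]
      simp only [star_trivial]
      rw [dotProduct_mulVec, ← mulVec_transpose, transpose_transpose, dotProduct_comm])
    B σ μ hB hσ h2 (mulVec_norm_bound E b B hb hB hE hbB)
    (mulVec_norm_bound Eᵀ b B hb hB (fun i k => hE k i) (by rw [mul_comm (K : ℝ)]; exact hbB))
    (WithLp.toLp 2 w) (WithLp.toLp 2 u) (WithLp.toLp 2 v) (hn w hw) (hn v hv) (hn u hu1)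
    (WithLp.toLp 2 (Aᵀ *ᵥ u))
    (by rw [hin, toLpLin_apply, hAx]; rfl)
    (by
      rw [hin, toLpLin_apply]
      have : A *ᵥ (Aᵀ *ᵥ u) = μ • u := by rw [mulVec_mulVec, heig]
      rw [hAy] at this
      have h' := congrArg (WithLp.toLp 2) this
      simpa using h')
    (by
      rw [toLpLin_apply]
      have h1 : (σ • WithLp.toLp 2 v + WithLp.toLp 2 (Eᵀ *ᵥ w) : EuclideanSpace ℝ (Fin K))
          = WithLp.toLp 2 (Aᵀ *ᵥ w) := by
        rw [hAx, hww, mul_one]; rfl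
      simp only
      rw [h1, ← real_inner_self_eq_norm_sq, hin]
      rw [hww, mul_one, ← mulVec_mulVec, dotProduct_mulVec, ← mulVec_transpose] at hray
      exact hray)
    (EuclideanSpace.single i 1) (EuclideanSpace.single k 1) (by simp) (by simp)
  simp only [EuclideanSpace.inner_single_left, toLpLin_apply, hin] at hc
  have hY : (vecMulVec u u * A) i k = u i * (Aᵀ *ᵥ u) k := by
    rw [vecMulVec_mul, vecMulVec_apply, mulVec_transpose]
  rw [hY]
  simpa using hc

lemma sum_antidiag_last {L K ℓ : ℕ} (hL : ℓ < L) (hK : ℓ < K) (F : ℕ → ℕ → ℝ) :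
    (∑ i : Fin L, ∑ k : Fin K, if (i : ℕ) + (k : ℕ) = L + K - 2 - ℓ then F i k else 0)
      = ∑ s ∈ Finset.range (ℓ + 1), F (L - 1 - s) (K - 1 - (ℓ - s)) := by
  have h1 : ∀ i : ℕ, (∑ k : Fin K, if i + (k : ℕ) = L + K - 2 - ℓ then F i k else 0)
      = ∑ k ∈ Finset.range K, if i + k = L + K - 2 - ℓ then F i k else 0 := by
    intro i
    exact Fin.sum_univ_eq_sum_range (fun k => if i + k = L + K - 2 - ℓ then F i k else 0) K
  simp only [h1]
  rw [Fin.sum_univ_eq_sum_range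
    (fun i => ∑ k ∈ Finset.range K, if i + k = L + K - 2 - ℓ then F i k else 0) L]
  rw [← Finset.sum_range_reflect]
  have h2 : ∀ s ∈ Finset.range L, (∑ k ∈ Finset.range K,
      if L - 1 - s + k = L + K - 2 - ℓ then F (L - 1 - s) k else 0)
      = if s < ℓ + 1 then F (L - 1 - s) (K - 1 - (ℓ - s)) else 0 := by
    intro s hs
    rw [Finset.mem_range] at hs
    split_ifs with h
    · rw [Finset.sum_eq_single (K - 1 - (ℓ - s))]
      · rw [if_pos]; omega
      · intro b hb hb'
        rw [Finset.mem_range] at hb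
        rw [if_neg]; omega
      · intro hb
        rw [Finset.mem_range] at hb
        omega
    · apply Finset.sum_eq_zero
      intro k hk
      rw [Finset.mem_range] at hk
      rw [if_neg]; omega
  rw [Finset.sum_congr rfl h2, ← Finset.sum_filter]
  congr 1
  ext s
  simp only [Finset.mem_filter, Finset.mem_range]
  omega

lemma hankelize_last {L K ℓ : ℕ} (hL : ℓ < L) (hK : ℓ < K) (F : ℕ → ℕ → ℝ)
    (Y : Matrix (Fin L) (Fin K) ℝ) (hY : ∀ i k, Y i k = F i k) :
    hankelize Y (L + K - 2 - ℓ)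
      = (∑ s ∈ Finset.range (ℓ + 1), F (L - 1 - s) (K - 1 - (ℓ - s))) / (ℓ + 1) := by
  unfold hankelize
  simp only [hY]
  rw [sum_antidiag_last hL hK F, sum_antidiag_last hL hK (fun _ _ => 1)]
  simp

lemma hankelize_bound {L K ℓ : ℕ} (hL : ℓ < L) (hK : ℓ < K)
    (Y : Matrix (Fin L) (Fin K) ℝ) (F : ℕ → ℕ → ℝ) (ε : ℝ) (hY : ∀ i k, |Y i k - F i k| ≤ ε) :
    |hankelize Y (L + K - 2 - ℓ)
      - (∑ s ∈ Finset.range (ℓ + 1), F (L - 1 - s) (K - 1 - (ℓ - s))) / (ℓ + 1)| ≤ ε := by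
  rw [← hankelize_last hL hK F (Matrix.of fun i k => F i k) (fun i k => rfl)]
  have hden : (∑ i : Fin L, ∑ k : Fin K, if (i : ℕ) + (k : ℕ) = L + K - 2 - ℓ then (1 : ℝ) else 0)
      = ℓ + 1 := by
    rw [sum_antidiag_last hL hK (fun _ _ => 1)]; simp
  unfold hankelize
  rw [← sub_div, abs_div, hden, abs_of_pos (by positivity : (0:ℝ) < ℓ + 1),
    div_le_iff₀ (by positivity), ← hden, ← Finset.sum_sub_distrib, Finset.mul_sum]
  refine (Finset.abs_sum_le_sum_abs _ _).trans (Finset.sum_le_sum fun i _ => ?_)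
  rw [← Finset.sum_sub_distrib, Finset.mul_sum]
  refine (Finset.abs_sum_le_sum_abs _ _).trans (Finset.sum_le_sum fun k _ => ?_)
  split_ifs with h
  · simpa using hY i k
  · simp

/-- squared normalised last component -/
noncomputable def gg (a : ℝ) (M : ℕ) : ℝ := (a ^ (M - 1)) ^ 2 / normSq (Wvec a M)

/-- `e^{-iξ}` -/
noncomputable def zet (ξ : ℝ) : ℂ := Complex.exp (-(ξ : ℂ) * Complex.I)

/-- phase factor -/
noncomputable def phs (ξ φ : ℝ) (N : ℕ) : ℂ := Complex.exp (((ξ * N + φ : ℝ) : ℂ) * Complex.I)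

/-- partial geometric sum -/
noncomputable def geoS (a ξ : ℝ) (M : ℕ) : ℂ := ∑ t ∈ Finset.range M, (zet ξ * (a : ℂ)⁻¹) ^ t

lemma cosNoise_eq (ξ φ : ℝ) (N m : ℕ) (h : m + 1 ≤ N) :
    cosNoise ξ φ (N - 1 - m) = (phs ξ φ N * zet ξ ^ (1 + m)).re := by
  unfold cosNoise phs zet
  rw [← Complex.exp_nat_mul, ← Complex.exp_add]
  have : ((ξ * N + φ : ℝ) : ℂ) * Complex.I + ((1 + m : ℕ) : ℂ) * (-(ξ : ℂ) * Complex.I)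
      = ((ξ * ((N - 1 - m : ℕ) : ℝ) + φ : ℝ) : ℂ) * Complex.I := by
    rw [Nat.sub_sub, Nat.cast_sub (by omega)]
    push_cast; ring
  rw [this, Complex.exp_ofReal_mul_I_re]

lemma normSq_W (a : ℝ) (ha : 1 < a) (M : ℕ) : normSq (Wvec a M) = (a ^ (2 * M) - 1) / (a ^ 2 - 1) := by
  unfold normSq Wvec
  rw [Fin.sum_univ_eq_sum_range (fun i => (a ^ i) ^ 2) M]
  have : ∀ i, (a ^ i) ^ 2 = (a ^ 2) ^ i := by intro i; ring
  simp only [this]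
  rw [geom_sum_eq (by nlinarith)]
  rw [← pow_mul]

lemma normSq_W_ge (a : ℝ) (ha : 1 < a) (M : ℕ) (hM : 0 < M) :
    (a ^ (M - 1)) ^ 2 ≤ normSq (Wvec a M) := by
  unfold normSq Wvec
  have := Finset.single_le_sum (f := fun i : Fin M => (a ^ (i : ℕ)) ^ 2)
    (fun i _ => sq_nonneg _) (Finset.mem_univ ⟨M - 1, by omega⟩)
  simpa using this

lemma gg_tendsto (a : ℝ) (ha : 1 < a) :
    Tendsto (gg a) atTop (nhds ((a ^ 2 - 1) / a ^ 2)) := by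
  have h1 : Tendsto (fun M : ℕ => (a ^ 2 - 1) / a ^ 2 * (1 - ((a⁻¹) ^ 2) ^ M)⁻¹) atTop
      (nhds ((a ^ 2 - 1) / a ^ 2 * (1 - 0)⁻¹)) := by
    apply Tendsto.const_mul
    apply Tendsto.inv₀ _ (by norm_num)
    apply Tendsto.const_sub
    apply tendsto_pow_atTop_nhds_zero_of_lt_one (by positivity)
    have : a⁻¹ < 1 := inv_lt_one_of_one_lt₀ ha
    have : 0 < a⁻¹ := by positivity
    nlinarith
  rw [sub_zero, inv_one, mul_one] at h1
  apply h1.congr'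
  filter_upwards [eventually_ge_atTop 1] with M hM
  unfold gg
  rw [normSq_W a ha]
  obtain ⟨m, rfl⟩ : ∃ m, M = m + 1 := ⟨M - 1, by omega⟩
  have h0 : a ≠ 0 := by positivity
  have h2 : a ^ 2 - 1 ≠ 0 := by nlinarith
  have h3 : 1 < a ^ (2 * (m + 1)) := one_lt_pow₀ ha (by omega)
  have h4 : a ^ (2 * (m + 1)) - 1 ≠ 0 := by linarith
  have h5 : 1 - ((a⁻¹) ^ 2) ^ (m + 1) = (a ^ (2 * (m + 1)) - 1) / a ^ (2 * (m + 1)) := by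
    rw [← pow_mul, inv_pow]; field_simp
  rw [h5]
  simp only [Nat.add_sub_cancel]
  field_simp
  ring

lemma zet_norm (ξ : ℝ) : ‖zet ξ‖ = 1 := by
  unfold zet
  have : -(ξ : ℂ) * Complex.I = ((-ξ : ℝ) : ℂ) * Complex.I := by push_cast; ring
  rw [this, Complex.norm_exp_ofReal_mul_I]

lemma geoS_tendsto (a ξ : ℝ) (ha : 1 < a) :
    Tendsto (geoS a ξ) atTop (nhds (1 - zet ξ * (a : ℂ)⁻¹)⁻¹) := by
  apply HasSum.tendsto_sum_nat
  apply hasSum_geometric_of_norm_lt_one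
  rw [norm_mul, zet_norm, norm_inv, Complex.norm_real, Real.norm_eq_abs, abs_of_pos (by linarith)]
  simpa using inv_lt_one_of_one_lt₀ ha

/-- normalised `W` -/
noncomputable def wn (a : ℝ) (M : ℕ) (i : ℕ) : ℝ := a ^ i / Real.sqrt (normSq (Wvec a M))

lemma normSq_W_pos (a : ℝ) (ha : 1 < a) (M : ℕ) (hM : 0 < M) : 0 < normSq (Wvec a M) :=
  lt_of_lt_of_le (by positivity) (normSq_W_ge a ha M hM)

lemma wn_normSq (a : ℝ) (ha : 1 < a) (M : ℕ) (hM : 0 < M) :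
    normSq (fun i : Fin M => wn a M i) = 1 := by
  have h := normSq_W_pos a ha M hM
  have h2 : normSq (fun i : Fin M => wn a M i) = normSq (Wvec a M) / normSq (Wvec a M) := by
    conv_lhs => unfold normSq wn
    simp only [div_pow, Real.sq_sqrt h.le]
    rw [← Finset.sum_div]
    rfl
  rw [h2, div_self h.ne']

lemma wn_rev (a : ℝ) (ha : 1 < a) (M s : ℕ) (hs : s < M) :
    wn a M (M - 1 - s) = wn a M (M - 1) * (a⁻¹) ^ s := by
  unfold wn
  have : a ^ (M - 1) = a ^ (M - 1 - s) * a ^ s := by rw [← pow_add]; congr 1; omega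
  have h0 : a ≠ 0 := by positivity
  rw [this, inv_pow]
  field_simp

lemma wn_sq (a : ℝ) (ha : 1 < a) (M : ℕ) (hM : 0 < M) : wn a M (M - 1) ^ 2 = gg a M := by
  unfold wn gg
  rw [div_pow, Real.sq_sqrt (normSq_W_pos a ha M hM).le]

lemma Ev_formula (a ξ φ : ℝ) (ha : 1 < a) (L K N s : ℕ) (hN : L + K = N + 1) (hs : s < L) :
    ∑ k : Fin K, cosNoise ξ φ (L - 1 - s + k) * wn a K k
      = (phs ξ φ N * zet ξ ^ (1 + s) * (wn a K (K - 1) * geoS a ξ K)).re := by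
  rw [Fin.sum_univ_eq_sum_range (fun k => cosNoise ξ φ (L - 1 - s + k) * wn a K k) K,
    ← Finset.sum_range_reflect, geoS, Finset.mul_sum, Finset.mul_sum, Complex.re_sum]
  apply Finset.sum_congr rfl
  intro t ht
  rw [Finset.mem_range] at ht
  rw [wn_rev a ha K t ht]
  have : L - 1 - s + (K - 1 - t) = N - 1 - (s + t) := by omega
  rw [this, cosNoise_eq ξ φ N (s + t) (by omega), mul_comm, ← Complex.re_ofReal_mul]
  congr 1
  push_cast
  rw [mul_pow]
  ring

lemma wEv_formula (a ξ φ : ℝ) (ha : 1 < a) (L K N : ℕ) (hN : L + K = N + 1) :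
    ∑ i : Fin L, wn a L i * ∑ k : Fin K, cosNoise ξ φ (i + k) * wn a K k
      = (phs ξ φ N * zet ξ * ((wn a L (L - 1) * geoS a ξ L) * (wn a K (K - 1) * geoS a ξ K))).re := by
  rw [Fin.sum_univ_eq_sum_range (fun i => wn a L i * ∑ k : Fin K, cosNoise ξ φ (i + k) * wn a K k) L,
    ← Finset.sum_range_reflect]
  have : ∀ s ∈ Finset.range L, wn a L (L - 1 - s) *
      ∑ k : Fin K, cosNoise ξ φ (L - 1 - s + k) * wn a K k
      = (phs ξ φ N * zet ξ * ((wn a L (L - 1) * (zet ξ * (a : ℂ)⁻¹) ^ s)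
        * (wn a K (K - 1) * geoS a ξ K))).re := by
    intro s hs
    rw [Finset.mem_range] at hs
    rw [Ev_formula a ξ φ ha L K N s hN hs, wn_rev a ha L s hs, ← Complex.re_ofReal_mul]
    congr 1
    push_cast
    rw [mul_pow]
    ring
  rw [Finset.sum_congr rfl this, ← Complex.re_sum, ← Finset.mul_sum, ← Finset.sum_mul,
    ← Finset.mul_sum]
  rfl

/-- The complex amplitude of the first-order error at the entry `(L-1-s, K-1-t)`. -/
noncomputable def Zst (a : ℝ) (z : ℂ) (gL gK : ℝ) (SL SK : ℂ) (s t : ℕ) : ℂ :=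
  z ^ (1 + s) * SK * gK * (a : ℂ)⁻¹ ^ t - (a : ℂ)⁻¹ ^ s * (a : ℂ)⁻¹ ^ t * gL * gK * z * SL * SK
    + (a : ℂ)⁻¹ ^ s * z ^ (1 + t) * gL * SL

/-- first order error matrix -/
noncomputable def Tmat (a ξ φ : ℝ) (L K : ℕ) (i k : ℕ) : ℝ :=
  ((∑ k : Fin K, cosNoise ξ φ (i + k) * wn a K k)
    - wn a L i * ∑ i : Fin L, wn a L i * ∑ k : Fin K, cosNoise ξ φ (i + k) * wn a K k) * wn a K k
    + wn a L i * ∑ i : Fin L, cosNoise ξ φ (k + i) * wn a L i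

lemma Tmat_eq (a ξ φ : ℝ) (ha : 1 < a) (L K N s t : ℕ) (hN : L + K = N + 1) (hs : s < L)
    (ht : t < K) :
    Tmat a ξ φ L K (L - 1 - s) (K - 1 - t)
      = (phs ξ φ N * Zst a (zet ξ) (gg a L) (gg a K) (geoS a ξ L) (geoS a ξ K) s t).re := by
  unfold Tmat
  rw [Ev_formula a ξ φ ha L K N s hN hs, wEv_formula a ξ φ ha L K N hN,
    Ev_formula a ξ φ ha K L N t (by omega) ht, wn_rev a ha L s hs, wn_rev a ha K t ht,
    ← wn_sq a ha L (by omega), ← wn_sq a ha K (by omega), mul_comm _ (wn a K (K - 1) * a⁻¹ ^ t),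
    ← Complex.re_ofReal_mul, ← Complex.sub_re, ← Complex.re_ofReal_mul, ← Complex.re_ofReal_mul,
    ← Complex.add_re]
  congr 1
  unfold Zst
  push_cast
  ring

lemma Z_ne_zero (a ξ : ℝ) (ha : 1 < a) (ℓ : ℕ) (hC : C1 a ξ ℓ ^ 2 + C2 a ξ ℓ ^ 2 > 0) :
    (∑ s ∈ Finset.range (ℓ + 1), Zst a (zet ξ) ((a ^ 2 - 1) / a ^ 2) ((a ^ 2 - 1) / a ^ 2)
      (1 - zet ξ * (a : ℂ)⁻¹)⁻¹ (1 - zet ξ * (a : ℂ)⁻¹)⁻¹ s (ℓ - s)) / (ℓ + 1) ≠ 0 := by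
  set z := zet ξ with hz
  set S := (1 - z * (a : ℂ)⁻¹)⁻¹ with hS
  have ha0 : (a : ℂ) ≠ 0 := by
    rw [Ne, Complex.ofReal_eq_zero]; positivity
  have hzn : ‖z‖ = 1 := zet_norm ξ
  have hz0 : z ≠ 0 := by
    intro h; rw [h] at hzn; simp at hzn
  set z' := (Real.cos ξ : ℂ) + Real.sin ξ * Complex.I with hz'
  have hzc : z = Real.cos ξ - Real.sin ξ * Complex.I := by
    rw [hz, zet, Complex.exp_mul_I]
    simp [Complex.cos_neg, Complex.sin_neg]; ring
  have hzl : z ^ ℓ = Real.cos (ℓ * ξ) - Real.sin (ℓ * ξ) * Complex.I := by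
    rw [hz, zet, ← Complex.exp_nat_mul]
    have : (ℓ : ℂ) * (-(ξ : ℂ) * Complex.I) = (-(ℓ * ξ)) * Complex.I := by ring
    rw [this, Complex.exp_mul_I]
    simp [Complex.cos_neg, Complex.sin_neg]; ring
  have hcs : (Real.cos ξ : ℂ) ^ 2 + (Real.sin ξ : ℂ) ^ 2 = 1 := by
    have := Real.cos_sq_add_sin_sq ξ
    exact_mod_cast this
  have hzz : z * z' = 1 := by
    rw [hzc, hz']
    linear_combination hcs - (Real.sin ξ : ℂ) ^ 2 * Complex.I_sq
  have han : ‖(a : ℂ)‖ = a := by rw [Complex.norm_real, Real.norm_eq_abs, abs_of_pos (by linarith)]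
  have haz : (a : ℂ) - z ≠ 0 := by
    intro h
    have h1 : (a : ℂ) = z := sub_eq_zero.1 h
    rw [← h1, han] at hzn; linarith
  have haz' : (a : ℂ) - z' ≠ 0 := by
    intro h
    have h1 : (a : ℂ) = z' := sub_eq_zero.1 h
    rw [← h1] at hzz
    have h2 : ‖z * (a : ℂ)‖ = 1 := by rw [hzz]; simp
    rw [norm_mul, hzn, han] at h2; linarith
  have hSS : S = a / (a - z) := by
    rw [hS]; field_simp
  set A := (a : ℂ)⁻¹ ^ ℓ with hA
  have hAz : ((a ^ (-(ℓ : ℤ)) : ℝ) : ℂ) = A := by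
    rw [_root_.zpow_neg, zpow_natCast, hA]; push_cast; rw [inv_pow]
  have hG : (Gfun a ξ : ℂ) = (a ^ 2 - 1) / (a * ((a - z) * (a - z'))) := by
    unfold Gfun
    push_cast
    congr 2
    rw [hzc, hz']
    push_cast at hcs ⊢
    linear_combination -hcs + (Complex.sin ξ) ^ 2 * Complex.I_sq
  have hCC : (C1 a ξ ℓ : ℂ) - C2 a ξ ℓ * Complex.I
      = 2 / (ℓ + 1) * (a * z ^ ℓ - A * z') - (a - z') ^ 2 * Gfun a ξ * A := by
    rw [← hAz, hzl, hz']
    unfold C1 C2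
    push_cast at hcs ⊢
    linear_combination ((Gfun a ξ : ℂ) * (a : ℂ) ^ (-(ℓ : ℤ))) * hcs +
       (Gfun a ξ : ℂ) * (a : ℂ) ^ (-(ℓ : ℤ)) * (Complex.sin ξ) ^ 2 * Complex.I_sq
  have hCne : (C1 a ξ ℓ : ℂ) - C2 a ξ ℓ * Complex.I ≠ 0 := by
    intro h
    have h1 := congrArg Complex.re h
    have h2 := congrArg Complex.im h
    simp at h1 h2
    rw [h1, h2] at hC
    norm_num at hC
  set g := (((a ^ 2 - 1) / a ^ 2 : ℝ) : ℂ) with hg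
  have hgs : g = ((a : ℂ) ^ 2 - 1) / a ^ 2 := by rw [hg]; push_cast; rfl
  have hg0 : g ≠ 0 := by
    rw [hg, Ne, Complex.ofReal_eq_zero]
    have : 0 < a ^ 2 - 1 := by nlinarith
    positivity
  set Q := ∑ s ∈ Finset.range (ℓ + 1), z ^ s * (a : ℂ)⁻¹ ^ (ℓ - s) with hQ
  have hQ1 : Q * (z - (a : ℂ)⁻¹) = z ^ (ℓ + 1) - (a : ℂ)⁻¹ ^ (ℓ + 1) := by
    rw [hQ, ← geom_sum₂_mul]
    simp
  have hQ2 : ∑ s ∈ Finset.range (ℓ + 1), (a : ℂ)⁻¹ ^ s * z ^ (ℓ - s) = Q := by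
    rw [hQ, ← Finset.sum_range_reflect]
    apply Finset.sum_congr rfl
    intro s hs
    rw [Finset.mem_range] at hs
    have h1 : ℓ + 1 - 1 - s = ℓ - s := by omega
    have h2 : ℓ - (ℓ - s) = s := by omega
    rw [h1, h2, mul_comm]
  have hsum : ∑ s ∈ Finset.range (ℓ + 1), Zst a z ((a ^ 2 - 1) / a ^ 2) ((a ^ 2 - 1) / a ^ 2)
      S S s (ℓ - s) = 2 * (z * S * g) * Q - (ℓ + 1) * (A * g ^ 2 * z * S ^ 2) := by
    have : ∀ s ∈ Finset.range (ℓ + 1), Zst a z ((a ^ 2 - 1) / a ^ 2) ((a ^ 2 - 1) / a ^ 2)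
      S S s (ℓ - s) = (z * S * g) * (z ^ s * (a : ℂ)⁻¹ ^ (ℓ - s)) - A * g ^ 2 * z * S ^ 2
        + (z * S * g) * ((a : ℂ)⁻¹ ^ s * z ^ (ℓ - s)) := by
      intro s hs
      rw [Finset.mem_range] at hs
      have h1 : A = (a : ℂ)⁻¹ ^ s * (a : ℂ)⁻¹ ^ (ℓ - s) := by
        rw [hA, ← pow_add]; congr 1; omega
      rw [h1]
      unfold Zst
      rw [← hg]
      ring
    rw [Finset.sum_congr rfl this, Finset.sum_add_distrib, Finset.sum_sub_distrib,
      Finset.sum_const, ← Finset.mul_sum, ← Finset.mul_sum, hQ2, ← hQ]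
    simp
    ring
  have hl0 : (ℓ : ℂ) + 1 ≠ 0 := by exact_mod_cast Nat.succ_ne_zero ℓ
  have hfin : (z - (a : ℂ)⁻¹) * a * ((2 * (z * S * g) * Q - (ℓ + 1) * (A * g ^ 2 * z * S ^ 2)) / (ℓ + 1))
      = z ^ 2 * g * S * ((C1 a ξ ℓ : ℂ) - C2 a ξ ℓ * Complex.I) := by
    have e1 : (z - (a : ℂ)⁻¹) * a * ((2 * (z * S * g) * Q - (ℓ + 1) * (A * g ^ 2 * z * S ^ 2)) / (ℓ + 1))
      = z * S * g * (2 / (ℓ + 1) * a * (Q * (z - (a : ℂ)⁻¹)) - (z * a - 1) * A * g * S) := by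
      field_simp
    have e2 : z * (a - z') = z * a - 1 := by rw [mul_sub, hzz]
    have e3 : (a - z') ^ 2 * (Gfun a ξ : ℂ) = (a - z') * g * S := by
      rw [hG, hSS, hgs]; field_simp
    have e4 : z * (a * z ^ ℓ - A * z') = a * (z ^ (ℓ + 1) - (a : ℂ)⁻¹ ^ (ℓ + 1)) := by
      rw [pow_succ ((a : ℂ)⁻¹), ← hA, mul_sub, mul_sub]
      have : (a : ℂ) * (A * (a : ℂ)⁻¹) = A := by field_simp
      rw [this]
      linear_combination -A * hzz
    rw [e1, hQ1, hCC, e3]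
    linear_combination (-z * g * S * (2 / (ℓ + 1))) * e4 + (z * g ^ 2 * S ^ 2 * A) * e2
  rw [hsum]
  intro h0
  rw [h0, mul_zero] at hfin
  have hS0 : S ≠ 0 := by rw [hSS]; exact div_ne_zero ha0 haz
  exact (mul_ne_zero (mul_ne_zero (mul_ne_zero (pow_ne_zero 2 hz0) hg0) hS0) hCne) hfin.symm

lemma recErr_bound (a ξ φ δ : ℝ) (ha : 1 < a) (L K N ℓ : ℕ) (hN : L + K = N + 1) (hL : ℓ < L)
    (hK : ℓ < K) (u : Fin L → ℝ) (hu : IsTopEigenvector (HdeltaSq a ξ φ δ L K) u)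
    (hbig : 2 * (|δ| * N) ≤ a ^ (N - 1)) :
    |recErr a ξ φ δ L K u (N - 1 - ℓ)
      - δ * (phs ξ φ N * ((∑ s ∈ Finset.range (ℓ + 1),
        Zst a (zet ξ) (gg a L) (gg a K) (geoS a ξ L) (geoS a ξ K) s (ℓ - s)) / (ℓ + 1))).re|
      ≤ 200 * (|δ| * N) ^ 2 / a ^ (N - 1) := by
  have hl : 0 < Real.sqrt (normSq (Wvec a L)) := Real.sqrt_pos.2 (normSq_W_pos a ha L (by omega))
  have hk : 0 < Real.sqrt (normSq (Wvec a K)) := Real.sqrt_pos.2 (normSq_W_pos a ha K (by omega))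
  set σ := Real.sqrt (normSq (Wvec a L)) * Real.sqrt (normSq (Wvec a K)) with hσ
  have hσ0 : 0 < σ := by positivity
  have hσge : a ^ (N - 1) ≤ σ := by
    have h1 : N - 1 = (L - 1) + (K - 1) := by omega
    rw [h1, pow_add, hσ]
    gcongr
    · exact Real.le_sqrt_of_sq_le (normSq_W_ge a ha L (by omega))
    · exact Real.le_sqrt_of_sq_le (normSq_W_ge a ha K (by omega))
  have hpos : 0 < a ^ (N - 1) := by positivity
  set E := hankelOf (cosNoise ξ φ) L K with hE
  have hb := entry_bound (δ • E) |δ| (|δ| * N) σ (abs_nonneg _) (by positivity)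
    (by
      intro i k
      have : |E i k| ≤ 1 := Real.abs_cos_le_one _
      rw [Matrix.smul_apply, smul_eq_mul, abs_mul]
      nlinarith [abs_nonneg δ])
    (by
      rw [mul_pow, sq (N : ℝ)]
      have h1 : (L : ℝ) ≤ N := by exact_mod_cast (by omega : L ≤ N)
      have h2 : (K : ℝ) ≤ N := by exact_mod_cast (by omega : K ≤ N)
      gcongr)
    hσ0 (hbig.trans hσge) (fun i => wn a L i) (fun k => wn a K k) (wn_normSq a ha L (by omega))
    (wn_normSq a ha K (by omega)) (hankelOf (expSignal a) L K + δ • E)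
    (by
      congr 1
      ext i k
      simp only [hankelOf, expSignal, Matrix.of_apply, Matrix.smul_apply, vecMulVec_apply, wn,
        smul_eq_mul, hσ]
      rw [pow_add]
      field_simp) u hu
  have hent : ∀ (i : Fin L) (k : Fin K), |(vecMulVec u u * (hankelOf (expSignal a) L K + δ • E)) i k
      - (fun i k : ℕ => a ^ (i + k) + δ * Tmat a ξ φ L K i k) i k|
      ≤ 200 * (|δ| * N) ^ 2 / a ^ (N - 1) := by
    intro i k
    have h1 := (hb i k).trans (div_le_div_of_nonneg_left (by positivity) hpos hσge)
    have e1 : ∀ i : Fin L, ((δ • E) *ᵥ fun k : Fin K => wn a K k) i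
        = δ * ∑ k : Fin K, cosNoise ξ φ (i + k) * wn a K k := by
      intro i
      rw [smul_mulVec]; rfl
    have e2 : ((δ • E)ᵀ *ᵥ fun k : Fin L => wn a L k) k
        = δ * ∑ i : Fin L, cosNoise ξ φ (k + i) * wn a L i := by
      rw [transpose_smul, smul_mulVec, Pi.smul_apply, smul_eq_mul]
      congr 1
      simp only [mulVec, dotProduct, transpose_apply, hE, hankelOf, Matrix.of_apply]
      exact Finset.sum_congr rfl fun x _ => by rw [add_comm]
    have e3 : ((fun i : Fin L => wn a L i) ⬝ᵥ ((δ • E) *ᵥ fun k : Fin K => wn a K k))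
        = δ * ∑ i : Fin L, wn a L i * ∑ k : Fin K, cosNoise ξ φ (i + k) * wn a K k := by
      simp only [dotProduct, e1, Finset.mul_sum]
      exact Finset.sum_congr rfl fun x _ => Finset.sum_congr rfl fun y _ => by ring
    have e4 : σ * wn a L i * wn a K k = a ^ ((i : ℕ) + (k : ℕ)) := by
      rw [hσ, wn, wn, pow_add]
      field_simp
    rw [e1, e2, e3, e4] at h1
    refine le_trans (le_of_eq ?_) h1
    congr 1
    unfold Tmat
    ring
  have hh := hankelize_bound hL hK
    (vecMulVec u u * (hankelOf (expSignal a) L K + δ • E))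
    (fun i k : ℕ => a ^ (i + k) + δ * Tmat a ξ φ L K i k) _ hent
  have hj : L + K - 2 - ℓ = N - 1 - ℓ := by omega
  rw [hj] at hh
  have hsum : (∑ s ∈ Finset.range (ℓ + 1),
      (fun i k : ℕ => a ^ (i + k) + δ * Tmat a ξ φ L K i k) (L - 1 - s) (K - 1 - (ℓ - s))) / (ℓ + 1 : ℝ)
      = a ^ (N - 1 - ℓ) + δ * (phs ξ φ N * ((∑ s ∈ Finset.range (ℓ + 1),
        Zst a (zet ξ) (gg a L) (gg a K) (geoS a ξ L) (geoS a ξ K) s (ℓ - s)) / (ℓ + 1))).re := by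
    have h1 : ∀ s ∈ Finset.range (ℓ + 1),
      (fun i k : ℕ => a ^ (i + k) + δ * Tmat a ξ φ L K i k) (L - 1 - s) (K - 1 - (ℓ - s))
      = a ^ (N - 1 - ℓ) + δ * (phs ξ φ N *
        Zst a (zet ξ) (gg a L) (gg a K) (geoS a ξ L) (geoS a ξ K) s (ℓ - s)).re := by
      intro s hs
      rw [Finset.mem_range] at hs
      have : L - 1 - s + (K - 1 - (ℓ - s)) = N - 1 - ℓ := by omega
      simp only [this]
      rw [Tmat_eq a ξ φ ha L K N s (ℓ - s) hN (by omega) (by omega)]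
    rw [Finset.sum_congr rfl h1, Finset.sum_add_distrib, Finset.sum_const, ← Finset.mul_sum,
      ← Complex.re_sum, ← Finset.mul_sum, Finset.card_range, add_div]
    have h0 : ((ℓ : ℝ) + 1) ≠ 0 := by positivity
    congr 1
    · simp only [nsmul_eq_mul]; push_cast; field_simp
    · rw [mul_div_assoc]
      congr 1
      rw [← mul_div_assoc]
      have : ((ℓ : ℂ) + 1) = ((ℓ + 1 : ℝ) : ℂ) := by push_cast; rfl
      rw [this, Complex.div_ofReal_re]
  rw [hsum] at hh
  unfold recErr
  refine le_trans (le_of_eq ?_) hh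
  congr 1
  ring

lemma err_tendsto (a δ : ℝ) (ha : 1 < a) :
    Tendsto (fun N : ℕ => 200 * (|δ| * N) ^ 2 / a ^ (N - 1)) atTop (nhds 0) := by
  have h := (tendsto_pow_const_div_const_pow_of_one_lt 2 ha).const_mul (200 * |δ| ^ 2 * a)
  rw [mul_zero] at h
  apply h.congr'
  filter_upwards [eventually_ge_atTop 1] with N hN
  obtain ⟨m, rfl⟩ : ∃ m, N = m + 1 := ⟨N - 1, by omega⟩
  simp only [Nat.add_sub_cancel]
  have h0 : a ≠ 0 := by positivity
  field_simp
  ring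

lemma big_eventually (a δ : ℝ) (ha : 1 < a) :
    ∀ᶠ N : ℕ in atTop, 2 * (|δ| * N) ≤ a ^ (N - 1) := by
  have h := (tendsto_pow_const_div_const_pow_of_one_lt 1 ha).const_mul (2 * |δ| * a)
  rw [mul_zero] at h
  filter_upwards [eventually_ge_atTop 1, h.eventually (gt_mem_nhds one_pos)] with N hN h1
  obtain ⟨m, rfl⟩ : ∃ m, N = m + 1 := ⟨N - 1, by omega⟩
  simp only [Nat.add_sub_cancel]
  have h0 : 0 < a := by positivity
  rw [← mul_div_assoc, div_lt_one (by positivity), pow_succ a m] at h1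
  have : (2 * (|δ| * ((m + 1 : ℕ) : ℝ))) * a ≤ a ^ m * a := by
    rw [pow_one] at h1; nlinarith
  exact le_of_mul_le_mul_right this h0


/-- for rational frequency `ω = p/q` the sequence of last
reconstruction errors `N ↦ r_{N-1-ℓ}(N)` has at least two distinct cluster
points; in particular it does not converge. -/
theorem stmt_5 (a ξ φ α : ℝ) (ha : 1 < a) (hξ : ξ ∈ Set.Ioo 0 Real.pi)
    (hφ : φ ∈ Set.Ico 0 (2 * Real.pi)) (hα : α ∈ Set.Ioo (0 : ℝ) 1)
    (L K : ℕ → ℕ)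
    (hLK : ∀ N, 3 ≤ N → 1 < L N ∧ L N ≤ K N ∧ L N + K N = N + 1)
    (hlim : Tendsto (fun N : ℕ => (L N : ℝ) / (N : ℝ)) atTop (nhds α))
    (p q : ℕ) (hp : 0 < p) (hq : 0 < q) (hcop : Nat.Coprime p q) (hpq : 2 * p < q)
    (hξval : ξ = 2 * Real.pi * (p : ℝ) / (q : ℝ))
    (ℓ : ℕ) (δ : ℝ) (hδ : δ ≠ 0)
    (hC : C1 a ξ ℓ ^ 2 + C2 a ξ ℓ ^ 2 > 0)
    (u : ∀ N : ℕ, Fin (L N) → ℝ)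
    (hu : ∀ N, 3 ≤ N → IsTopEigenvector (HdeltaSq a ξ φ δ (L N) (K N)) (u N)) :
    (∃ x y : ℝ, x ≠ y ∧
      MapClusterPt x atTop (fun N : ℕ => recErr a ξ φ δ (L N) (K N) (u N) (N - 1 - ℓ)) ∧
      MapClusterPt y atTop (fun N : ℕ => recErr a ξ φ δ (L N) (K N) (u N) (N - 1 - ℓ))) ∧
    ¬ ∃ l : ℝ, Tendsto (fun N : ℕ => recErr a ξ φ δ (L N) (K N) (u N) (N - 1 - ℓ))
        atTop (nhds l) := by
  have ha0 : 0 < a := by linarith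
  -- L, K tend to infinity
  have hLinf : Tendsto L atTop atTop := by
    have h1 : Tendsto (fun N : ℕ => (L N : ℝ) / (N : ℝ) * (N : ℝ)) atTop atTop :=
      hlim.pos_mul_atTop hα.1 tendsto_natCast_atTop_atTop
    have h2 : Tendsto (fun N : ℕ => (L N : ℝ)) atTop atTop := by
      apply h1.congr'
      filter_upwards [eventually_ge_atTop 1] with N hN
      have : (N : ℝ) ≠ 0 := by positivity
      field_simp
    exact tendsto_natCast_atTop_iff.1 h2
  have hKinf : Tendsto K atTop atTop := by
    apply tendsto_atTop_mono' _ _ hLinf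
    filter_upwards [eventually_ge_atTop 3] with N hN
    exact (hLK N hN).2.1
  set Z : ℂ := (∑ s ∈ Finset.range (ℓ + 1), Zst a (zet ξ) ((a ^ 2 - 1) / a ^ 2)
    ((a ^ 2 - 1) / a ^ 2) (1 - zet ξ * (a : ℂ)⁻¹)⁻¹ (1 - zet ξ * (a : ℂ)⁻¹)⁻¹ s (ℓ - s))
      / (ℓ + 1) with hZ
  have hZ0 : Z ≠ 0 := Z_ne_zero a ξ ha ℓ hC
  have hZlim : Tendsto (fun N : ℕ => (∑ s ∈ Finset.range (ℓ + 1),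
        Zst a (zet ξ) (gg a (L N)) (gg a (K N)) (geoS a ξ (L N)) (geoS a ξ (K N)) s (ℓ - s))
          / ((ℓ : ℂ) + 1)) atTop (nhds Z) := by
    have gL := (Complex.continuous_ofReal.tendsto _).comp ((gg_tendsto a ha).comp hLinf)
    have gK := (Complex.continuous_ofReal.tendsto _).comp ((gg_tendsto a ha).comp hKinf)
    have sL := (geoS_tendsto a ξ ha).comp hLinf
    have sK := (geoS_tendsto a ξ ha).comp hKinf
    apply Tendsto.div_const
    apply tendsto_finsetSum
    intro s _
    unfold Zst
    exact ((((tendsto_const_nhds.mul sK).mul gK).mul tendsto_const_nhds).sub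
      (((((tendsto_const_nhds.mul gL).mul gK).mul tendsto_const_nhds).mul sL).mul sK)).add
      ((tendsto_const_nhds.mul gL).mul sL)
  set x : ℕ → ℝ := fun N : ℕ => recErr a ξ φ δ (L N) (K N) (u N) (N - 1 - ℓ) with hx
  set ZN : ℕ → ℂ := fun N => (∑ s ∈ Finset.range (ℓ + 1),
        Zst a (zet ξ) (gg a (L N)) (gg a (K N)) (geoS a ξ (L N)) (geoS a ξ (K N)) s (ℓ - s))
          / ((ℓ : ℂ) + 1) with hZN
  have hdiff : Tendsto (fun N => x N - δ * (phs ξ φ N * ZN N).re) atTop (nhds 0) := by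
    apply squeeze_zero_norm' _ (err_tendsto a δ ha)
    filter_upwards [eventually_ge_atTop 3, big_eventually a δ ha,
      hLinf.eventually (eventually_gt_atTop ℓ), hKinf.eventually (eventually_gt_atTop ℓ)]
      with N h3 hb hl hk
    exact recErr_bound a ξ φ δ ha (L N) (K N) N ℓ (hLK N h3).2.2 hl hk (u N) (hu N h3) hb
  have hq0 : (q : ℝ) ≠ 0 := by positivity
  -- subsequences
  have hphs : ∀ r m : ℕ, phs ξ φ (q * m + r) = phs ξ φ r := by
    intro r m
    unfold phs
    rw [Complex.exp_eq_exp_iff_exists_int]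
    refine ⟨(p * m : ℕ), ?_⟩
    have : ξ * ((q * m + r : ℕ) : ℝ) + φ = (ξ * r + φ) + (p * m : ℕ) * (2 * Real.pi) := by
      rw [hξval]; push_cast; field_simp; ring
    rw [this]
    push_cast
    ring
  have hsubinf : ∀ r : ℕ, Tendsto (fun m : ℕ => q * m + r) atTop atTop := by
    intro r
    apply tendsto_atTop_mono _ tendsto_id
    intro m
    simp only [id]
    nlinarith
  have hsub : ∀ r : ℕ, Tendsto (fun m : ℕ => x (q * m + r)) atTop
      (nhds (δ * (phs ξ φ r * Z).re)) := by
    intro r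
    have h1 := hdiff.comp (hsubinf r)
    have h2 := hZlim.comp (hsubinf r)
    have h3 : Tendsto (fun m => δ * (phs ξ φ r * ZN (q * m + r)).re) atTop
        (nhds (δ * (phs ξ φ r * Z).re)) :=
      ((Complex.continuous_re.tendsto _).comp (h2.const_mul _)).const_mul _
    have h4 := h1.add h3
    rw [zero_add] at h4
    refine h4.congr fun m => ?_
    simp only [Function.comp_apply, hphs]
    ring
  have hclus : ∀ r : ℕ, MapClusterPt (δ * (phs ξ φ r * Z).re) atTop x := by
    intro r
    exact MapClusterPt.of_comp (hsubinf r) (hsub r).mapClusterPt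
  have hne : ¬ ((phs ξ φ 0 * Z).re = (phs ξ φ 1 * Z).re ∧
      (phs ξ φ 0 * Z).re = (phs ξ φ 2 * Z).re) := by
    rintro ⟨h1, h2⟩
    set z := phs ξ φ 0 * Z with hz
    have hz0 : z ≠ 0 := mul_ne_zero (Complex.exp_ne_zero _) hZ0
    have hr : ∀ r : ℕ, phs ξ φ r * Z = (Real.cos (ξ * r) + Real.sin (ξ * r) * Complex.I) * z := by
      intro r
      have : phs ξ φ r = (Real.cos (ξ * r) + Real.sin (ξ * r) * Complex.I) * phs ξ φ 0 := by
        unfold phs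
        rw [Complex.ofReal_cos, Complex.ofReal_sin, ← Complex.exp_mul_I, ← Complex.exp_add]
        congr 1
        push_cast; ring
      rw [this, hz]; ring
    rw [hr] at h1 h2
    clear_value z
    have hs : 0 < Real.sin ξ := Real.sin_pos_of_pos_of_lt_pi hξ.1 hξ.2
    have h2x : ξ * ((2 : ℕ) : ℝ) = 2 * ξ := by push_cast; ring
    rw [h2x, Real.cos_two_mul, Real.sin_two_mul] at h2
    have h1x : ξ * ((1 : ℕ) : ℝ) = ξ := by push_cast; ring
    rw [h1x] at h1
    have e1 : z.re = Real.cos ξ * z.re - Real.sin ξ * z.im := by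
      rw [Complex.mul_re] at h1; simpa [-Complex.ofReal_cos, -Complex.ofReal_sin] using h1
    have e2 : z.re = (2 * Real.cos ξ ^ 2 - 1) * z.re - 2 * Real.sin ξ * Real.cos ξ * z.im := by
      have : (((2 * Real.cos ξ ^ 2 - 1 : ℝ) : ℂ) + ((2 * Real.sin ξ * Real.cos ξ : ℝ) : ℂ)
        * Complex.I).re = (2 * Real.cos ξ ^ 2 - 1) := by
        rw [Complex.add_re, Complex.re_ofReal_mul, Complex.ofReal_re]; simp
      have h' : (((2 * Real.cos ξ ^ 2 - 1 : ℝ) : ℂ) + ((2 * Real.sin ξ * Real.cos ξ : ℝ) : ℂ)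
        * Complex.I).im = 2 * Real.sin ξ * Real.cos ξ := by
        rw [Complex.add_im, Complex.im_ofReal_mul, Complex.ofReal_im]; simp
      rw [Complex.mul_re, this, h'] at h2
      exact h2
    have hcl : Real.cos ξ < 1 := by
      nlinarith [Real.cos_sq_add_sin_sq ξ, Real.cos_le_one ξ]
    have e3 : (1 - Real.cos ξ) * z.re = 0 := by
      linear_combination (1/2 : ℝ) * e2 - Real.cos ξ * e1
    have e4 : z.re = 0 := by
      rcases mul_eq_zero.1 e3 with h | h
      · linarith
      · exact h
    have e5 : z.im = 0 := by
      rw [e4] at e1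
      have : Real.sin ξ * z.im = 0 := by linarith
      rcases mul_eq_zero.1 this with h | h
      · linarith
      · exact h
    exact hz0 (Complex.ext e4 e5)
  have hex : ∃ r₁ r₂ : ℕ, δ * (phs ξ φ r₁ * Z).re ≠ δ * (phs ξ φ r₂ * Z).re := by
    by_contra hcon
    push Not at hcon
    exact hne ⟨mul_left_cancel₀ hδ (hcon 0 1), mul_left_cancel₀ hδ (hcon 0 2)⟩
  obtain ⟨r₁, r₂, hrr⟩ := hex
  refine ⟨⟨_, _, hrr, hclus r₁, hclus r₂⟩, ?_⟩
  rintro ⟨l, hl⟩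
  apply hrr
  rw [tendsto_nhds_unique (hsub r₁) (hl.comp (hsubinf r₁)),
    tendsto_nhds_unique (hsub r₂) (hl.comp (hsubinf r₂))]
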